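/- arXiv:2210.01639 — 8 statements merged into one kernel-verified Lean document; each statement's English description precedes it below -/
import Mathlib

section
/- Let n ≥ 2 and let x_1, …, x_n be real numbers with at least two distinct values. Then the Yeo-Johnson negative log-likelihood λ ↦ NLL(λ) = (n/2)·log σ²_λ − (λ−1)·Σ_{i=1}^n sign(x_i)·log(|x_i|+1) + (n/2)·log(2π) is a strictly convex function of λ on ℝ. -/
open scoped BigOperators

/-- The Yeo-Johnson transformation. -/
noncomputable def yj (l x : ℝ) : ℝ :=
  if 0 ≤ x then
    if l ≠ 0 then ((x + 1) ^ l - 1) / l else Real.log (x + 1)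
  else
    if l ≠ 2 then -(((1 - x) ^ (2 - l) - 1) / (2 - l)) else -Real.log (1 - x)

/-- The exponent function: `sign t * log (|t| + 1)`. -/
noncomputable def yjS (t : ℝ) : ℝ := Real.log (1 + max t 0) - Real.log (1 + max (-t) 0)

lemma yjS_nonneg {t : ℝ} (h : 0 ≤ t) : yjS t = Real.log (t + 1) := by
  simp [yjS, max_eq_left h, max_eq_right (neg_nonpos.2 h), add_comm]

lemma yjS_nonpos {t : ℝ} (h : t ≤ 0) : yjS t = -Real.log (1 - t) := by
  simp [yjS, max_eq_right h, max_eq_left (neg_nonneg.2 h), sub_eq_add_neg]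

lemma yjS_continuous : Continuous yjS := by
  unfold yjS
  refine Continuous.sub ?_ ?_
  · refine Continuous.log (by fun_prop) fun t => ?_
    have := le_max_right t 0
    linarith
  · refine Continuous.log (by fun_prop) fun t => ?_
    have := le_max_right (-t) 0
    linarith

lemma yjS_lt {x y : ℝ} (h : x < y) : yjS x < yjS y := by
  rcases le_total 0 x with hx | hx
  · rw [yjS_nonneg hx, yjS_nonneg (hx.trans h.le)]
    exact Real.log_lt_log (by linarith) (by linarith)
  · rcases le_total 0 y with hy | hy
    · rw [yjS_nonpos hx, yjS_nonneg hy]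
      have h1 : 0 ≤ Real.log (1 - x) := Real.log_nonneg (by linarith)
      have h2 : 0 ≤ Real.log (y + 1) := Real.log_nonneg (by linarith)
      rcases hx.lt_or_eq with hx' | hx'
      · have : 0 < Real.log (1 - x) := Real.log_pos (by linarith)
        linarith
      · have : 0 < Real.log (y + 1) := Real.log_pos (by linarith)
        linarith
    · rw [yjS_nonpos hx, yjS_nonpos hy]
      have := Real.log_lt_log (x := 1 - y) (y := 1 - x) (by linarith) (by linarith)
      linarith

lemma yj_expcont (l : ℝ) : Continuous fun t => Real.exp ((l - 1) * yjS t) :=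
  Real.continuous_exp.comp (continuous_const.mul yjS_continuous)

lemma yj_eq_integral (l x : ℝ) : yj l x = ∫ t in (0:ℝ)..x, Real.exp ((l - 1) * yjS t) := by
  have hint : IntervalIntegrable (fun t => Real.exp ((l - 1) * yjS t)) MeasureTheory.volume 0 x :=
    (yj_expcont l).intervalIntegrable _ _
  unfold yj
  by_cases hx : 0 ≤ x
  · rw [if_pos hx]
    by_cases hl : l = 0
    · subst hl
      rw [if_neg (by simp), intervalIntegral.integral_eq_sub_of_hasDerivAt
        (f := fun t => Real.log (t + 1)) _ hint]
      · simp
      · intro t ht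
        rw [Set.uIcc_of_le hx] at ht
        have ht1 : 0 < t + 1 := by linarith [ht.1]
        have := ((hasDerivAt_id t).add_const (1:ℝ)).log ht1.ne'
        refine HasDerivAt.congr_deriv this ?_
        symm
        rw [yjS_nonneg ht.1]
        simp [Real.exp_neg, Real.exp_log ht1]
    · rw [if_pos hl, intervalIntegral.integral_eq_sub_of_hasDerivAt
        (f := fun t => (t + 1) ^ l / l) _ hint]
      · simp; ring
      · intro t ht
        rw [Set.uIcc_of_le hx] at ht
        have ht1 : 0 < t + 1 := by linarith [ht.1]
        have := (((hasDerivAt_id t).add_const (1:ℝ)).rpow_const (p := l) (Or.inl ht1.ne')).div_const l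
        refine HasDerivAt.congr_deriv this ?_
        symm
        rw [yjS_nonneg ht.1]
        simp only [id]
        rw [Real.rpow_def_of_pos ht1, mul_comm (Real.log _)]
        field_simp
  · rw [if_neg hx]
    push Not at hx
    by_cases hl : l = 2
    · subst hl
      rw [if_neg (by simp), intervalIntegral.integral_eq_sub_of_hasDerivAt
        (f := fun t => -Real.log (1 - t)) _ hint]
      · simp
      · intro t ht
        rw [Set.uIcc_of_ge hx.le] at ht
        have ht1 : 0 < 1 - t := by linarith [ht.2]
        have := (((hasDerivAt_id t).const_sub (1:ℝ)).log ht1.ne').neg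
        refine HasDerivAt.congr_deriv this ?_
        symm
        rw [yjS_nonpos ht.2]
        norm_num [Real.exp_neg, Real.exp_log ht1]
        field_simp
    · have hl2 : 2 - l ≠ 0 := sub_ne_zero.2 (Ne.symm hl)
      rw [if_pos hl, intervalIntegral.integral_eq_sub_of_hasDerivAt
        (f := fun t => -((1 - t) ^ (2 - l) / (2 - l))) _ hint]
      · simp; ring
      · intro t ht
        rw [Set.uIcc_of_ge hx.le] at ht
        have ht1 : 0 < 1 - t := by linarith [ht.2]
        have := ((((hasDerivAt_id t).const_sub (1:ℝ)).rpow_const (p := 2 - l)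
          (Or.inl ht1.ne')).div_const (2 - l)).neg
        refine HasDerivAt.congr_deriv this ?_
        symm
        rw [yjS_nonpos ht.2]
        simp only [id]
        rw [Real.rpow_def_of_pos ht1, show (l - 1) * -Real.log (1 - t)
          = Real.log (1 - t) * (2 - l - 1) by ring]
        field_simp

lemma yj_sub (l x y : ℝ) : yj l y - yj l x = ∫ t in x..y, Real.exp ((l - 1) * yjS t) := by
  rw [yj_eq_integral, yj_eq_integral, intervalIntegral.integral_interval_sub_left]
  · exact (yj_expcont l).intervalIntegrable _ _
  · exact (yj_expcont l).intervalIntegrable _ _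

lemma yj_pos {x y : ℝ} (l : ℝ) (h : x < y) : 0 < yj l y - yj l x := by
  rw [yj_sub]
  exact intervalIntegral.intervalIntegral_pos_of_pos ((yj_expcont l).intervalIntegrable _ _)
    (fun t => Real.exp_pos _) h

/-- Exponential form of weighted AM-GM. -/
lemma exp_amgm {a b u v : ℝ} (ha : 0 < a) (hb : 0 < b) (hab : a + b = 1) :
    Real.exp (a * u + b * v) ≤ a * Real.exp u + b * Real.exp v :=
  convexOn_exp.2 (Set.mem_univ u) (Set.mem_univ v) ha.le hb.le hab

lemma exp_amgm_lt {a b u v : ℝ} (ha : 0 < a) (hb : 0 < b) (hab : a + b = 1) (h : u ≠ v) :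
    Real.exp (a * u + b * v) < a * Real.exp u + b * Real.exp v :=
  strictConvexOn_exp.2 (Set.mem_univ u) (Set.mem_univ v) h ha hb hab

lemma yj_logconvex {x y l m a b : ℝ} (h : x < y) (hlm : l ≠ m) (ha : 0 < a) (hb : 0 < b)
    (hab : a + b = 1) :
    Real.log (yj (a * l + b * m) y - yj (a * l + b * m) x)
      < a * Real.log (yj l y - yj l x) + b * Real.log (yj m y - yj m x) := by
  have hL := yj_pos l h
  have hM := yj_pos m h
  set A := Real.log (yj l y - yj l x) with hA
  set B := Real.log (yj m y - yj m x) with hB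
  rw [Real.log_lt_iff_lt_exp (yj_pos _ h)]
  have key : Real.exp (-(a * A + b * B)) * (yj (a * l + b * m) y - yj (a * l + b * m) x) < 1 := by
    have e1 : Real.exp (-A) * (yj l y - yj l x) = 1 := by
      rw [Real.exp_neg, hA, Real.exp_log hL, inv_mul_cancel₀ hL.ne']
    have e2 : Real.exp (-B) * (yj m y - yj m x) = 1 := by
      rw [Real.exp_neg, hB, Real.exp_log hM, inv_mul_cancel₀ hM.ne']
    have e3 : (1:ℝ) = ∫ t in x..y, (a * (Real.exp (-A) * Real.exp ((l - 1) * yjS t))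
        + b * (Real.exp (-B) * Real.exp ((m - 1) * yjS t))) := by
      have i1 : ∀ c k : ℝ, IntervalIntegrable
          (fun t => c * (Real.exp k * Real.exp ((l - 1) * yjS t))) MeasureTheory.volume x y :=
        fun c k => (continuous_const.mul
          (continuous_const.mul (yj_expcont l))).intervalIntegrable _ _
      have i2 : ∀ c k : ℝ, IntervalIntegrable
          (fun t => c * (Real.exp k * Real.exp ((m - 1) * yjS t))) MeasureTheory.volume x y :=
        fun c k => (continuous_const.mul
          (continuous_const.mul (yj_expcont m))).intervalIntegrable _ _
      rw [intervalIntegral.integral_add (i1 _ _) (i2 _ _)]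
      simp only [intervalIntegral.integral_const_mul]
      rw [← yj_sub, ← yj_sub, e1, e2]
      linarith
    rw [yj_sub, ← intervalIntegral.integral_const_mul]
    conv_rhs => rw [e3]
    have heq : ∀ t, Real.exp (-(a * A + b * B)) * Real.exp ((a * l + b * m - 1) * yjS t)
        = Real.exp (a * (-A + (l - 1) * yjS t) + b * (-B + (m - 1) * yjS t)) := by
      intro t
      rw [← Real.exp_add]
      congr 1
      have : b = 1 - a := by linarith
      subst this
      ring
    refine intervalIntegral.integral_lt_integral_of_continuousOn_of_le_of_exists_lt h
      (continuous_const.mul (yj_expcont _)).continuousOn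
      ((continuous_const.mul (continuous_const.mul (yj_expcont l))).add
        (continuous_const.mul (continuous_const.mul (yj_expcont m)))).continuousOn ?_ ?_
    · intro t _
      rw [heq, ← Real.exp_add, ← Real.exp_add]
      exact exp_amgm ha hb hab
    · have hs := yjS_lt h
      by_cases hx : -A + (l - 1) * yjS x = -B + (m - 1) * yjS x
      · refine ⟨y, ⟨h.le, le_rfl⟩, ?_⟩
        rw [heq, ← Real.exp_add, ← Real.exp_add]
        refine exp_amgm_lt ha hb hab ?_
        intro hy
        have : (l - m) * (yjS y - yjS x) = 0 := by linarith
        rcases mul_eq_zero.1 this with h' | h'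
        · exact hlm (by linarith)
        · linarith
      · refine ⟨x, ⟨le_rfl, h.le⟩, ?_⟩
        rw [heq, ← Real.exp_add, ← Real.exp_add]
        exact exp_amgm_lt ha hb hab hx
  rw [Real.exp_neg, inv_mul_lt_iff₀ (Real.exp_pos _), mul_one] at key
  exact key

lemma yj_sq_lt {x y l m a b : ℝ} (h : x ≠ y) (hlm : l ≠ m) (ha : 0 < a) (hb : 0 < b)
    (hab : a + b = 1) :
    Real.log ((yj (a * l + b * m) y - yj (a * l + b * m) x) ^ 2)
      < a * Real.log ((yj l y - yj l x) ^ 2) + b * Real.log ((yj m y - yj m x) ^ 2) := by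
  rcases h.lt_or_gt with h | h
  · have := yj_logconvex h hlm ha hb hab
    simp only [Real.log_pow]
    push_cast
    linarith
  · have := yj_logconvex h hlm ha hb hab
    rw [← neg_sq, ← neg_sq (yj l y - yj l x), ← neg_sq (yj m y - yj m x)]
    simp only [neg_sub, Real.log_pow]
    push_cast
    linarith

lemma variance_pair (n : ℕ) (hn : 0 < n) (f : Fin n → ℝ) :
    (1 / n : ℝ) * ∑ i, (f i - (1 / n : ℝ) * ∑ j, f j) ^ 2
      = (1 / (2 * n ^ 2) : ℝ) * ∑ p : Fin n × Fin n, (f p.1 - f p.2) ^ 2 := by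
  have hn' : (n : ℝ) ≠ 0 := by positivity
  rw [Fintype.sum_prod_type]
  simp only [sub_sq, Finset.sum_add_distrib, Finset.sum_sub_distrib, ← Finset.mul_sum,
    ← Finset.sum_mul, Finset.sum_const, Finset.card_univ, Fintype.card_fin, nsmul_eq_mul]
  field_simp
  ring

lemma log_sum_lt {ι : Type*} (s : Finset ι) (F P Q : ι → ℝ) {a b : ℝ} (ha : 0 < a) (hb : 0 < b)
    (hab : a + b = 1) (hF : ∀ k ∈ s, 0 < F k) (hP : ∀ k ∈ s, 0 < P k) (hQ : ∀ k ∈ s, 0 < Q k)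
    (hs : s.Nonempty)
    (h : ∀ k ∈ s, Real.log (F k) < a * Real.log (P k) + b * Real.log (Q k)) :
    Real.log (∑ k ∈ s, F k) < a * Real.log (∑ k ∈ s, P k) + b * Real.log (∑ k ∈ s, Q k) := by
  have hPs := Finset.sum_pos hP hs
  have hQs := Finset.sum_pos hQ hs
  rw [Real.log_lt_iff_lt_exp (Finset.sum_pos hF hs)]
  set A := Real.log (∑ k ∈ s, P k) with hA
  set B := Real.log (∑ k ∈ s, Q k) with hB
  have key : Real.exp (-(a * A + b * B)) * ∑ k ∈ s, F k < 1 := by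
    have e1 : Real.exp (-A) * (∑ k ∈ s, P k) = 1 := by
      rw [Real.exp_neg, hA, Real.exp_log hPs, inv_mul_cancel₀ hPs.ne']
    have e2 : Real.exp (-B) * (∑ k ∈ s, Q k) = 1 := by
      rw [Real.exp_neg, hB, Real.exp_log hQs, inv_mul_cancel₀ hQs.ne']
    have e3 : ∑ k ∈ s, (a * (Real.exp (-A) * P k) + b * (Real.exp (-B) * Q k)) = 1 := by
      rw [Finset.sum_add_distrib, ← Finset.mul_sum, ← Finset.mul_sum, ← Finset.mul_sum,
        ← Finset.mul_sum, e1, e2]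
      linarith
    rw [← e3, Finset.mul_sum]
    refine Finset.sum_lt_sum_of_nonempty hs fun k hk => ?_
    have h1 := exp_amgm (u := -A + Real.log (P k)) (v := -B + Real.log (Q k)) ha hb hab
    rw [Real.exp_add (-A), Real.exp_add (-B), Real.exp_log (hP k hk), Real.exp_log (hQ k hk)] at h1
    refine lt_of_lt_of_le ?_ h1
    nth_rewrite 1 [← Real.exp_log (hF k hk)]
    rw [← Real.exp_add]
    refine Real.exp_lt_exp.2 ?_
    have := h k hk
    linarith
  rw [Real.exp_neg, inv_mul_lt_iff₀ (Real.exp_pos _), mul_one] at key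
  exact key

lemma variance_log_lt (n : ℕ) (hn : 2 ≤ n) (x : Fin n → ℝ) (hdist : ∃ i j, x i ≠ x j)
    {l m a b : ℝ} (hlm : l ≠ m) (ha : 0 < a) (hb : 0 < b) (hab : a + b = 1)
    (V : ℝ → ℝ)
    (hV : ∀ l, V l = (1 / n : ℝ) * ∑ i, (yj l (x i) - (1 / n : ℝ) * ∑ j, yj l (x j)) ^ 2) :
    Real.log (V (a * l + b * m)) < a * Real.log (V l) + b * Real.log (V m) := by
  classical
  have hn0 : 0 < n := by omega
  have hnR : (0:ℝ) < n := by exact_mod_cast hn0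
  set s : Finset (Fin n × Fin n) := Finset.univ.filter fun p => x p.1 ≠ x p.2 with hs
  have hne : s.Nonempty := by
    obtain ⟨i, j, hij⟩ := hdist
    exact ⟨(i, j), by simp [hs, hij]⟩
  have hpos : ∀ l, ∀ p ∈ s, 0 < (yj l (x p.1) - yj l (x p.2)) ^ 2 := by
    intro l p hp
    have hp' : x p.1 ≠ x p.2 := by simpa [hs] using hp
    rcases hp'.lt_or_gt with h | h
    · have := yj_pos l h
      exact sq_pos_of_neg (by linarith)
    · exact pow_pos (yj_pos l h) 2
  have hV2 : ∀ l, Real.log (V l) = Real.log (1 / (2 * n ^ 2) : ℝ)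
      + Real.log (∑ p ∈ s, (yj l (x p.1) - yj l (x p.2)) ^ 2) := by
    intro l
    have : ∑ p : Fin n × Fin n, (yj l (x p.1) - yj l (x p.2)) ^ 2
        = ∑ p ∈ s, (yj l (x p.1) - yj l (x p.2)) ^ 2 := by
      symm
      refine Finset.sum_subset (Finset.subset_univ _) fun p _ hp => ?_
      have hp' : x p.1 = x p.2 := by simpa [hs] using hp
      simp [hp']
    rw [hV, variance_pair n hn0 (fun i => yj l (x i)), this,
      Real.log_mul (by positivity) (Finset.sum_pos (hpos l) hne).ne']
  have := log_sum_lt s _ _ _ ha hb hab (hpos (a * l + b * m)) (hpos l) (hpos m) hne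
    (fun p hp => yj_sq_lt (x := x p.2) (y := x p.1)
      (by have hp' : x p.1 ≠ x p.2 := by simpa [hs] using hp
          exact hp'.symm) hlm ha hb hab)
  rw [hV2, hV2, hV2]
  have hb' : b = 1 - a := by linarith
  subst hb'
  linarith

/-- The Yeo-Johnson negative log-likelihood is strictly convex. -/
theorem yj_nll_strictConvexOn (n : ℕ) (hn : 2 ≤ n) (x : Fin n → ℝ)
    (hdist : ∃ i j, x i ≠ x j) :
    StrictConvexOn ℝ Set.univ (fun l : ℝ =>
      (n / 2 : ℝ) *
          Real.log ((1 / n : ℝ) * ∑ i, (yj l (x i) - (1 / n : ℝ) * ∑ j, yj l (x j)) ^ 2)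
        - (l - 1) * ∑ i, Real.sign (x i) * Real.log (|x i| + 1)
        + (n / 2 : ℝ) * Real.log (2 * Real.pi)) := by
  refine ⟨convex_univ, ?_⟩
  intro l _ m _ hlm a b ha hb hab
  have hnR : (0:ℝ) < n := by
    have : 0 < n := by omega
    exact_mod_cast this
  have key := variance_log_lt n hn x hdist hlm ha hb hab _ (fun _ => rfl)
  have key2 := mul_lt_mul_of_pos_left key (show (0:ℝ) < n / 2 by positivity)
  simp only [smul_eq_mul] at *
  have hb' : b = 1 - a := by linarith
  subst hb'
  linarith
end

section
/- Let a > 1 be a real number. Define g : ℝ → ℝ by g(λ) = log((a^λ − 1)/λ) for λ ≠ 0 and g(0) = log(log a). Then g is strictly convex on ℝ. In particular, λ ↦ log((a^λ − 1)/λ) is strictly convex on each of the intervals (−∞, 0) and (0, ∞). -/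
/-- `sinh u / u`, extended by `1` at `0`. -/
noncomputable def shc (u : ℝ) : ℝ := if u = 0 then 1 else Real.sinh u / u

lemma shc_eq_dslope : shc = dslope Real.sinh 0 := by
  funext u
  by_cases h : u = 0
  · subst h; simp [shc, dslope_same]
  · rw [dslope_of_ne _ h]; simp [shc, h, slope_def_field]

lemma continuous_shc : Continuous shc := by
  rw [shc_eq_dslope, continuous_iff_continuousAt]
  intro u
  by_cases h : u = 0
  · subst h; exact continuousAt_dslope_same.2 Real.differentiable_sinh.differentiableAt
  · exact (continuousAt_dslope_of_ne h).2 Real.continuous_sinh.continuousAt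

lemma shc_neg (u : ℝ) : shc (-u) = shc u := by
  simp [shc, Real.sinh_neg, neg_div_neg_eq]

lemma shc_pos (u : ℝ) : 0 < shc u := by
  unfold shc
  split_ifs with h
  · exact one_pos
  · rcases lt_or_gt_of_ne h with h | h
    · exact div_pos_of_neg_of_neg (Real.sinh_neg_iff.2 h) h
    · exact div_pos (Real.sinh_pos_iff.2 h) h

lemma deriv_shc {u : ℝ} (h : 0 < u) :
    deriv (fun u => Real.log (shc u)) u = Real.cosh u / Real.sinh u - 1 / u := by
  have hs := Real.sinh_pos_iff.2 h
  have h1 : (fun u => Real.log (shc u)) =ᶠ[nhds u]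
      fun u => Real.log (Real.sinh u) - Real.log u := by
    filter_upwards [lt_mem_nhds h] with v hv
    have := Real.sinh_pos_iff.2 hv
    simp only [shc, hv.ne', if_false]
    rw [Real.log_div this.ne' hv.ne']
  rw [h1.deriv_eq]
  have := ((Real.hasDerivAt_sinh u).log hs.ne').sub ((hasDerivAt_id u).log h.ne')
  exact this.deriv

lemma sinh_lt_mul_cosh {u : ℝ} (h : 0 < u) : Real.sinh u < u * Real.cosh u := by
  have hd : ∀ x : ℝ, HasDerivAt (fun x => x * Real.cosh x - Real.sinh x) (x * Real.sinh x) x := by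
    intro x
    have := ((hasDerivAt_id x).mul (Real.hasDerivAt_cosh x)).sub (Real.hasDerivAt_sinh x)
    refine this.congr_deriv ?_
    simp
  have hm : StrictMonoOn (fun x => x * Real.cosh x - Real.sinh x) (Set.Ici (0:ℝ)) := by
    apply strictMonoOn_of_deriv_pos (convex_Ici 0)
    · exact fun x _ => (hd x).continuousAt.continuousWithinAt
    · intro x hx
      rw [interior_Ici] at hx
      rw [(hd x).deriv]
      exact mul_pos hx (Real.sinh_pos_iff.2 hx)
  have := hm (Set.mem_Ici.2 le_rfl) (Set.mem_Ici.2 h.le) h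
  simp at this
  linarith

lemma strictMonoOn_coth : StrictMonoOn (fun u => Real.cosh u / Real.sinh u - 1 / u)
    (Set.Ioi (0:ℝ)) := by
  have hd : ∀ x : ℝ, 0 < x → HasDerivAt (fun u => Real.cosh u / Real.sinh u - 1 / u)
      (1 / x ^ 2 - 1 / Real.sinh x ^ 2) x := by
    intro x hx
    have hs := Real.sinh_pos_iff.2 hx
    have := ((Real.hasDerivAt_cosh x).div (Real.hasDerivAt_sinh x) hs.ne').sub
      ((hasDerivAt_const x (1:ℝ)).div (hasDerivAt_id x) hx.ne')
    refine this.congr_deriv ?_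
    have := Real.cosh_sq x
    simp only [id]
    field_simp
    rw [this]; ring
  apply strictMonoOn_of_deriv_pos (convex_Ioi 0)
  · exact fun x hx => (hd x hx).continuousAt.continuousWithinAt
  · intro x hx
    rw [interior_Ioi] at hx
    have hx : 0 < x := hx
    rw [(hd x hx).deriv, sub_pos]
    have := Real.self_lt_sinh_iff.2 hx
    gcongr

lemma strictConvexOn_shc : StrictConvexOn ℝ Set.univ (fun u => Real.log (shc u)) := by
  have hodd : ∀ u, deriv (fun u => Real.log (shc u)) (-u) =
      - deriv (fun u => Real.log (shc u)) u := by
    intro u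
    have := deriv_comp_neg (fun u => Real.log (shc u)) u
    simp only [shc_neg] at this
    linarith
  have h0 : deriv (fun u => Real.log (shc u)) 0 = 0 := by
    have := hodd 0
    rw [neg_zero] at this
    linarith
  have hm : StrictMono (deriv (fun u => Real.log (shc u))) := by
    apply strictMono_of_odd_strictMonoOn_nonneg hodd
    intro x hx y hy hxy
    have hx : 0 ≤ x := hx
    have hy : 0 < y := lt_of_le_of_lt hx hxy
    rcases hx.eq_or_lt with h | h
    · subst h
      rw [h0, deriv_shc hy, sub_pos, div_lt_div_iff₀ hy (Real.sinh_pos_iff.2 hy)]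
      linarith [sinh_lt_mul_cosh hy]
    · rw [deriv_shc h, deriv_shc hy]
      exact strictMonoOn_coth h hy hxy
  exact StrictMono.strictConvexOn_univ_of_deriv
    (continuous_shc.log fun u => (shc_pos u).ne') hm

/-- For `a > 1`, the function `g(λ) = log((a^λ − 1)/λ)` (extended by `g(0) = log (log a)`)
is strictly convex on `ℝ`; in particular `λ ↦ log((a^λ − 1)/λ)` is strictly convex on
`(−∞, 0)` and on `(0, ∞)`. -/
theorem strictConvexOn_log_boxcox_base (a : ℝ) (ha : 1 < a) :
    StrictConvexOn ℝ Set.univ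
        (fun l : ℝ => if l = 0 then Real.log (Real.log a) else Real.log ((a ^ l - 1) / l)) ∧
      StrictConvexOn ℝ (Set.Iio (0 : ℝ)) (fun l : ℝ => Real.log ((a ^ l - 1) / l)) ∧
      StrictConvexOn ℝ (Set.Ioi (0 : ℝ)) (fun l : ℝ => Real.log ((a ^ l - 1) / l)) := by
  have hL : 0 < Real.log a := Real.log_pos ha
  have key : ∀ l : ℝ, (if l = 0 then Real.log (Real.log a) else Real.log ((a ^ l - 1) / l)) =
      Real.log (Real.log a) + Real.log a / 2 * l + Real.log (shc (Real.log a / 2 * l)) := by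
    intro l
    split_ifs with h
    · subst h; simp [shc]
    · have hne : Real.log a / 2 * l ≠ 0 := by positivity
      rw [← Real.log_exp (Real.log a / 2 * l), ← Real.log_mul hL.ne' (Real.exp_pos _).ne',
        Real.log_exp, ← Real.log_mul (by positivity) (shc_pos _).ne']
      congr 1
      simp only [shc, hne, if_false]
      have e : a ^ l = Real.exp (Real.log a / 2 * l) * Real.exp (Real.log a / 2 * l) := by
        rw [← Real.exp_add, Real.rpow_def_of_pos (by linarith)]
        congr 1; ring
      rw [e, Real.sinh_eq, Real.exp_neg]
      have := (Real.exp_pos (Real.log a / 2 * l)).ne'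
      generalize Real.exp (Real.log a / 2 * l) = E at *
      field_simp
  have main : StrictConvexOn ℝ Set.univ
      (fun l : ℝ => if l = 0 then Real.log (Real.log a) else Real.log ((a ^ l - 1) / l)) := by
    refine ⟨convex_univ, ?_⟩
    intro x _ y _ hxy s t hs ht hst
    simp only [key]
    have hne : Real.log a / 2 * x ≠ Real.log a / 2 * y :=
      fun h => hxy (mul_left_cancel₀ (by positivity) h)
    have := strictConvexOn_shc.2 (Set.mem_univ _) (Set.mem_univ _) hne hs ht hst
    simp only [smul_eq_mul] at this ⊢
    rw [show Real.log a / 2 * (s * x + t * y) =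
      s * (Real.log a / 2 * x) + t * (Real.log a / 2 * y) by ring]
    have h2 : Real.log (Real.log a) = s * Real.log (Real.log a) + t * Real.log (Real.log a) := by
      rw [← add_mul, hst, one_mul]
    linarith
  refine ⟨main, ?_, ?_⟩
  · refine (main.subset (Set.subset_univ _) (convex_Iio 0)).congr ?_
    intro x hx
    exact if_neg (ne_of_lt hx)
  · refine (main.subset (Set.subset_univ _) (convex_Ioi 0)).congr ?_
    intro x hx
    exact if_neg (ne_of_gt hx)
end

section
/- For every real number a ≥ 1 and every λ ∈ ℝ, the quantity D(a, λ) := a^{2λ} − a^λ·λ²·(log a)² − 2·a^λ + 1 is nonnegative. Moreover, if a > 1 and λ ≠ 0 then D(a, λ) > 0. -/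
theorem yj_aux_sinh (y : ℝ) (hy : y ≠ 0) : y ^ 2 < Real.sinh y ^ 2 := by
  rcases lt_or_gt_of_ne hy with h | h
  · have h1 : Real.sinh y < y := Real.sinh_lt_self_iff.mpr h
    nlinarith
  · have h1 : y < Real.sinh y := Real.self_lt_sinh_iff.mpr h
    nlinarith

theorem yj_aux_eq (y : ℝ) :
    Real.exp (2 * y * 2) - Real.exp (2 * y) * (2 * y) ^ 2 - 2 * Real.exp (2 * y) + 1
      = 4 * Real.exp (2 * y) * (Real.sinh y ^ 2 - y ^ 2) := by
  have h1 : Real.exp (2 * y) = Real.exp y ^ 2 := by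
    rw [← Real.exp_nat_mul]; norm_num
  have h2 : Real.exp (2 * y * 2) = Real.exp y ^ 4 := by
    rw [← Real.exp_nat_mul]; congr 1; push_cast; ring
  have h3 := Real.exp_pos y
  rw [h1, h2, Real.sinh_eq, Real.exp_neg]
  field_simp
  ring

/-- For `a ≥ 1` the quantity `D(a, λ) = a^{2λ} − a^λ·λ²·(log a)² − 2·a^λ + 1` is
nonnegative, and it is positive whenever `a > 1` and `λ ≠ 0`. -/
theorem yj_D_nonneg (a : ℝ) (ha : 1 ≤ a) (l : ℝ) :
    0 ≤ a ^ (2 * l) - a ^ l * l ^ 2 * Real.log a ^ 2 - 2 * a ^ l + 1 ∧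
      (1 < a → l ≠ 0 →
        0 < a ^ (2 * l) - a ^ l * l ^ 2 * Real.log a ^ 2 - 2 * a ^ l + 1) := by
  have ha0 : 0 < a := by linarith
  obtain ⟨y, hy⟩ : ∃ y, y = Real.log a * l / 2 := ⟨_, rfl⟩
  have e1 : a ^ l = Real.exp (2 * y) := by
    rw [Real.rpow_def_of_pos ha0, hy]; congr 1; ring
  have e2 : a ^ (2 * l) = Real.exp (2 * y * 2) := by
    rw [Real.rpow_def_of_pos ha0, hy]; congr 1; ring
  have e3 : a ^ (2 * l) - a ^ l * l ^ 2 * Real.log a ^ 2 - 2 * a ^ l + 1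
      = 4 * Real.exp (2 * y) * (Real.sinh y ^ 2 - y ^ 2) := by
    rw [← yj_aux_eq, e1, e2]
    have : (2 * y) ^ 2 = l ^ 2 * Real.log a ^ 2 := by rw [hy]; ring
    rw [this]; ring
  have hp : 0 < 4 * Real.exp (2 * y) := by positivity
  rw [e3]
  constructor
  · by_cases h : y = 0
    · simp [h]
    · exact (mul_pos hp (sub_pos.mpr (yj_aux_sinh y h))).le
  · intro h1 hl
    have : y ≠ 0 := by
      have := Real.log_pos h1
      rw [hy]
      exact div_ne_zero (mul_ne_zero this.ne' hl) two_ne_zero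
    exact mul_pos hp (sub_pos.mpr (yj_aux_sinh y this))
end

section
/- For every λ ∈ ℝ, the function x ↦ Ψ(λ, x) is differentiable on ℝ and its derivative at every x equals (|x| + 1)^{sign(x)·(λ−1)} = exp[(λ − 1)·sign(x)·log(|x| + 1)]. In particular this derivative is strictly positive everywhere. -/
/-- The branch of the transformation used for nonnegative arguments. -/
noncomputable def yjPos (l x : ℝ) : ℝ :=
  if l ≠ 0 then ((x + 1) ^ l - 1) / l else Real.log (x + 1)

theorem yjPos_hasDerivAt (l x : ℝ) (hx : 0 < x + 1) :
    HasDerivAt (yjPos l) ((x + 1) ^ (l - 1)) x := by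
  have h1 : HasDerivAt (fun y : ℝ => y + 1) 1 x := (hasDerivAt_id x).add_const 1
  by_cases hl : l = 0
  · have e : yjPos l = fun y => Real.log (y + 1) := by
      funext y; simp [yjPos, hl]
    rw [e]
    refine (h1.log hx.ne').congr_deriv ?_
    rw [hl, zero_sub, Real.rpow_neg_one, one_div]
  · have e : yjPos l = fun y => ((y + 1) ^ l - 1) / l := by
      funext y; simp [yjPos, hl]
    rw [e]
    refine (((h1.rpow_const (p := l) (Or.inl hx.ne')).sub_const 1).div_const l).congr_deriv ?_
    field_simp

theorem yjNeg_hasDerivAt (l x : ℝ) (hx : 0 < 1 - x) :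
    HasDerivAt (fun y => -yjPos (2 - l) (-y)) ((1 - x) ^ (1 - l)) x := by
  have h := yjPos_hasDerivAt (2 - l) (-x) (by linarith)
  have h2 := (h.comp x (hasDerivAt_neg x)).neg
  refine HasDerivAt.congr_deriv h2 ?_
  rw [mul_neg_one, neg_neg]
  congr 1 <;> ring

theorem yj_eq_pos (l x : ℝ) (hx : 0 ≤ x) : yj l x = yjPos l x := by
  simp [yj, yjPos, hx]

theorem yjPos_zero (l : ℝ) : yjPos l 0 = 0 := by
  simp [yjPos]

theorem yj_eq_neg (l x : ℝ) (hx : x ≤ 0) : yj l x = -yjPos (2 - l) (-x) := by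
  rcases hx.lt_or_eq with h | h
  · have e : -x + 1 = 1 - x := by ring
    by_cases hl : l = 2
    · simp [yj, yjPos, not_le.2 h, hl, e]
    · have : 2 - l ≠ 0 := fun h => hl (by linarith)
      simp [yj, yjPos, not_le.2 h, hl, e, this]
  · rw [h, yj_eq_pos l 0 le_rfl, neg_zero, yjPos_zero, yjPos_zero, neg_zero]

theorem yj_hasDerivAt_aux (l x : ℝ) :
    HasDerivAt (fun y => yj l y) ((|x| + 1) ^ (Real.sign x * (l - 1))) x := by
  rcases lt_trichotomy x 0 with h | h | h
  · have h1 := yjNeg_hasDerivAt l x (by linarith)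
    rw [abs_of_neg h, Real.sign_of_neg h]
    have h2 := h1.congr_of_eventuallyEq (f₁ := fun y => yj l y) (by
      filter_upwards [Iio_mem_nhds h] with y hy
      exact yj_eq_neg l y (le_of_lt hy))
    refine h2.congr_deriv ?_
    congr 1 <;> ring
  · subst h
    have h1 := (yjNeg_hasDerivAt l 0 (by norm_num)).hasDerivWithinAt (s := Set.Iic 0)
    have h2 := (yjPos_hasDerivAt l 0 (by norm_num)).hasDerivWithinAt (s := Set.Ici 0)
    have h3 := h1.congr (f₁ := fun y => yj l y) (fun y hy => yj_eq_neg l y hy)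
      (yj_eq_neg l 0 le_rfl)
    have h4 := h2.congr (f₁ := fun y => yj l y) (fun y hy => yj_eq_pos l y hy)
      (yj_eq_pos l 0 le_rfl)
    simp only [sub_zero, zero_add, Real.one_rpow] at h3 h4
    have h5 := h3.union h4
    rw [Set.Iic_union_Ici, hasDerivWithinAt_univ] at h5
    simpa using h5
  · have h1 := yjPos_hasDerivAt l x (by linarith)
    rw [abs_of_pos h, Real.sign_of_pos h, one_mul]
    exact h1.congr_of_eventuallyEq (by
      filter_upwards [Ioi_mem_nhds h] with y hy
      exact yj_eq_pos l y (le_of_lt hy))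

/-- For every `λ`, the map `x ↦ Ψ(λ, x)` is differentiable with derivative
`(|x| + 1)^{sign(x)·(λ−1)} = exp((λ−1)·sign(x)·log(|x|+1)) > 0` at every `x`. -/
theorem yj_hasDerivAt_x (l x : ℝ) :
    HasDerivAt (fun y => yj l y) ((|x| + 1) ^ (Real.sign x * (l - 1))) x ∧
      (|x| + 1) ^ (Real.sign x * (l - 1)) =
        Real.exp ((l - 1) * Real.sign x * Real.log (|x| + 1)) ∧
      0 < (|x| + 1) ^ (Real.sign x * (l - 1)) := by
  have hp : 0 < |x| + 1 := by positivity
  refine ⟨yj_hasDerivAt_aux l x, ?_, Real.rpow_pos_of_pos hp _⟩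
  rw [Real.rpow_def_of_pos hp]
  congr 1
  ring
end

section
/- For every fixed x ∈ ℝ, the function λ ↦ Ψ(λ, x) is differentiable on ℝ, and its derivative ∂_λΨ(λ, x) equals: [(x+1)^λ·(log(x+1)) − Ψ(λ, x)]/λ if x ≥ 0 and λ ≠ 0; (log(x+1))²/2 if x ≥ 0 and λ = 0; [(1−x)^{2−λ}·(log(1−x)) + Ψ(λ, x)]/(2−λ) if x < 0 and λ ≠ 2; (log(1−x))²/2 if x < 0 and λ = 2. -/
open Filter Topology in
/-- The Box-Cox type building block, differentiated in the exponent. -/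
theorem boxcox_hasDerivAt (b : ℝ) (hb : 0 < b) (l : ℝ) :
    HasDerivAt (fun t : ℝ => if t ≠ 0 then (b ^ t - 1) / t else Real.log b)
      (if l ≠ 0 then (b ^ l * Real.log b - (b ^ l - 1) / l) / l else Real.log b ^ 2 / 2) l := by
  have hd : ∀ t : ℝ, HasDerivAt (fun t : ℝ => b ^ t) (b ^ t * Real.log b) t := fun t =>
    (Real.hasStrictDerivAt_const_rpow hb t).hasDerivAt
  by_cases hl : l = 0
  · subst hl
    simp only [ne_eq, not_true_eq_false, if_false]
    rw [hasDerivAt_iff_tendsto_slope]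
    have key : Tendsto (fun t : ℝ => (b ^ t - 1 - t * Real.log b) / t ^ 2) (𝓝[≠] 0)
        (𝓝 (Real.log b ^ 2 / 2)) := by
      apply HasDerivAt.lhopital_zero_nhdsNE (f' := fun t => b ^ t * Real.log b - Real.log b)
        (g' := fun t => 2 * t)
      · refine Eventually.of_forall fun t => ?_
        have := ((hd t).sub_const 1).sub ((hasDerivAt_id t).mul_const (Real.log b))
        simpa using! this
      · refine Eventually.of_forall fun t => ?_
        simpa using! hasDerivAt_pow 2 t
      · filter_upwards [self_mem_nhdsWithin] with t ht
        exact mul_ne_zero two_ne_zero ht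
      · have : ContinuousAt (fun t : ℝ => b ^ t - 1 - t * Real.log b) 0 :=
          ((hd 0).continuousAt.sub continuousAt_const).sub (by fun_prop)
        simpa [ContinuousAt] using this.tendsto.mono_left nhdsWithin_le_nhds
      · have : ContinuousAt (fun t : ℝ => t ^ 2) 0 := by fun_prop
        simpa [ContinuousAt] using this.tendsto.mono_left nhdsWithin_le_nhds
      · have h := (hasDerivAt_iff_tendsto_slope.1 (hd 0)).mul_const (Real.log b / 2)
        have e : b ^ (0:ℝ) * Real.log b * (Real.log b / 2) = Real.log b ^ 2 / 2 := by
          rw [Real.rpow_zero]; ring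
        rw [e] at h
        refine h.congr' ?_
        filter_upwards [self_mem_nhdsWithin] with t ht
        have ht : t ≠ 0 := ht
        simp only [slope_def_field, Real.rpow_zero, sub_zero]
        field_simp
    refine key.congr' ?_
    filter_upwards [self_mem_nhdsWithin] with t ht
    have ht : t ≠ 0 := ht
    simp only [slope_def_field, sub_zero, ht, not_true_eq_false, not_false_eq_true, if_true,
      if_false]
    field_simp
  · rw [if_pos hl]
    have h := ((hd l).sub_const 1).div (hasDerivAt_id l) hl
    have h2 : HasDerivAt (fun t : ℝ => (b ^ t - 1) / t)
        ((b ^ l * Real.log b - (b ^ l - 1) / l) / l) l := by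
      convert! h using 1
      simp only [id]
      field_simp
    refine h2.congr_of_eventuallyEq ?_
    filter_upwards [isOpen_ne.mem_nhds hl] with t ht
    exact if_pos ht

/-- For fixed `x`, the map `λ ↦ Ψ(λ, x)` is differentiable and its derivative is given
by the stated piecewise formula. -/
theorem yj_hasDerivAt_lambda (x l : ℝ) :
    HasDerivAt (fun t => yj t x)
      (if 0 ≤ x then
        if l ≠ 0 then ((x + 1) ^ l * Real.log (x + 1) - yj l x) / l
        else Real.log (x + 1) ^ 2 / 2
      else
        if l ≠ 2 then ((1 - x) ^ (2 - l) * Real.log (1 - x) + yj l x) / (2 - l)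
        else Real.log (1 - x) ^ 2 / 2) l := by
  by_cases hx : 0 ≤ x
  · have h := boxcox_hasDerivAt (x + 1) (by linarith) l
    simp only [yj, if_pos hx]
    convert! h using 1
    split_ifs <;> rfl
  · have h := ((boxcox_hasDerivAt (1 - x) (by linarith) (2 - l)).comp l
      ((hasDerivAt_id l).const_sub 2)).neg
    have e : ∀ t : ℝ, 2 - t ≠ 0 ↔ t ≠ 2 := fun t => by
      rw [sub_ne_zero, ne_comm]
    simp only [yj, if_neg hx]
    convert! h using 1
    · funext t
      by_cases ht : t = 2
      · simp [ht]
      · have := (e t).2 ht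
        simp [ht, this]
    · by_cases ht : l = 2
      · simp [ht]
      · have := (e l).2 ht
        simp only [ne_eq, ht, not_false_eq_true, if_true, this]
        ring
end

section
/- Fix x ≥ 0 and an integer k ≥ 1. Writing ∂_λ^k Ψ(λ, x) for the k-th derivative of λ ↦ Ψ(λ, x) (with ∂_λ^0 Ψ = Ψ), one has for every λ ≠ 0 the recursion ∂_λ^k Ψ(λ, x) = [(x+1)^λ·(log(x+1))^k − k·∂_λ^{k−1}Ψ(λ, x)]/λ, and at λ = 0 one has ∂_λ^k Ψ(0, x) = (log(x+1))^{k+1}/(k+1). In particular, λ ↦ Ψ(λ, x) is infinitely differentiable on ℝ. -/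
theorem yj_eq_dslope (x : ℝ) (hx : 0 ≤ x) :
    (fun t => yj t x) = dslope (fun t : ℝ => Real.exp (Real.log (x + 1) * t)) 0 := by
  have hpos : 0 < x + 1 := by linarith
  funext t
  by_cases ht : t = 0
  · subst ht
    have h : HasDerivAt (fun t : ℝ => Real.exp (Real.log (x + 1) * t))
        (Real.exp (Real.log (x + 1) * 0) * (Real.log (x + 1) * 1)) 0 :=
      ((hasDerivAt_id (0 : ℝ)).const_mul _).exp
    rw [dslope_same, h.deriv]
    simp [yj, hx]
  · rw [dslope_of_ne _ ht]
    simp [yj, hx, ht, slope_def_field, Real.rpow_def_of_pos hpos]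

theorem yj_contDiff (x : ℝ) (hx : 0 ≤ x) : ContDiff ℝ (⊤ : ℕ∞) fun t => yj t x := by
  have hpos : 0 < x + 1 := by linarith
  rw [contDiff_iff_contDiffAt]
  intro t
  by_cases ht : t = 0
  · subst ht
    rw [yj_eq_dslope x hx]
    have ha : AnalyticAt ℝ (fun t : ℝ => Real.exp (Real.log (x + 1) * t)) 0 := by fun_prop
    obtain ⟨p, hp⟩ := ha
    have h2 : AnalyticAt ℝ (dslope (fun t : ℝ => Real.exp (Real.log (x + 1) * t)) 0) 0 :=
      ⟨_, hp.has_fpower_series_dslope_fslope⟩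
    exact h2.contDiffAt
  · have h : ContDiffAt ℝ (⊤ : ℕ∞)
        (fun t : ℝ => (Real.exp (Real.log (x + 1) * t) - 1) / t) t := by
      apply ContDiffAt.div _ contDiffAt_id ht
      fun_prop
    refine h.congr_of_eventuallyEq ?_
    filter_upwards [isOpen_ne.mem_nhds ht] with s hs
    have hs' : s ≠ 0 := hs
    simp [yj, hx, hs', Real.rpow_def_of_pos hpos]

theorem yj_key (x : ℝ) (hx : 0 ≤ x) (n : ℕ) (t : ℝ) :
    t * iteratedDeriv (n + 1) (fun t => yj t x) t
      + (n + 1) * iteratedDeriv n (fun t => yj t x) t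
      = Real.log (x + 1) ^ (n + 1) * Real.exp (Real.log (x + 1) * t) := by
  have hpos : 0 < x + 1 := by linarith
  have hd : ∀ (m : ℕ) (t : ℝ), HasDerivAt (iteratedDeriv m (fun t => yj t x))
      (iteratedDeriv (m + 1) (fun t => yj t x) t) t := by
    intro m t
    rw [iteratedDeriv_succ]
    exact (((yj_contDiff x hx).differentiable_iteratedDeriv m
      (by exact_mod_cast WithTop.coe_lt_top m)) t).hasDerivAt
  have he : ∀ t : ℝ, HasDerivAt (fun t : ℝ => Real.exp (Real.log (x + 1) * t))
      (Real.exp (Real.log (x + 1) * t) * (Real.log (x + 1) * 1)) t := fun t =>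
    ((hasDerivAt_id t).const_mul _).exp
  induction n generalizing t with
  | zero =>
    have e : (fun t : ℝ => t * iteratedDeriv 0 (fun t => yj t x) t)
        = fun t => Real.exp (Real.log (x + 1) * t) - 1 := by
      funext s
      by_cases hs : s = 0
      · simp [hs]
      · simp only [iteratedDeriv_zero, yj, hx, hs, if_true, ne_eq, not_false_eq_true,
          Real.rpow_def_of_pos hpos]
        field_simp
    have h1 := (hasDerivAt_id' t).mul (hd 0 t)
    have h2 := (he t).sub_const 1
    have h3 := h1.unique (e ▸ h2)
    push_cast
    linarith
  | succ n ih =>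
    have e : (fun t : ℝ => t * iteratedDeriv (n + 1) (fun t => yj t x) t
          + (n + 1) * iteratedDeriv n (fun t => yj t x) t)
        = fun t => Real.log (x + 1) ^ (n + 1) * Real.exp (Real.log (x + 1) * t) :=
      funext ih
    have h1 := ((hasDerivAt_id' t).mul (hd (n + 1) t)).add ((hd n t).const_mul ((n : ℝ) + 1))
    have h2 := (he t).const_mul (Real.log (x + 1) ^ (n + 1))
    have h3 := h1.unique (e ▸ h2)
    push_cast
    rw [pow_succ]
    linarith

/-- For `x ≥ 0` and `k ≥ 1`, the iterated derivatives of `λ ↦ Ψ(λ, x)` satisfy the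
stated recursion for `λ ≠ 0`, equal `(log(x+1))^{k+1}/(k+1)` at `λ = 0`, and
`λ ↦ Ψ(λ, x)` is infinitely differentiable. -/
theorem yj_iteratedDeriv_lambda (x : ℝ) (hx : 0 ≤ x) (k : ℕ) (hk : 1 ≤ k) :
    (∀ l : ℝ, l ≠ 0 →
        iteratedDeriv k (fun t => yj t x) l =
          ((x + 1) ^ l * Real.log (x + 1) ^ k
              - k * iteratedDeriv (k - 1) (fun t => yj t x) l) / l) ∧
      iteratedDeriv k (fun t => yj t x) 0 = Real.log (x + 1) ^ (k + 1) / (k + 1) ∧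
      ContDiff ℝ (⊤ : ℕ∞) fun t => yj t x := by
  obtain ⟨n, rfl⟩ : ∃ n, k = n + 1 := ⟨k - 1, by omega⟩
  have hpos : 0 < x + 1 := by linarith
  refine ⟨fun l hl => ?_, ?_, yj_contDiff x hx⟩
  · have h := yj_key x hx n l
    rw [eq_div_iff hl, Real.rpow_def_of_pos hpos, Nat.add_sub_cancel]
    push_cast
    linarith
  · have h := yj_key x hx (n + 1) 0
    have h0 : ((n + 1 : ℕ) : ℝ) + 1 ≠ 0 := by positivity
    rw [eq_div_iff h0]
    simp only [zero_mul, mul_zero, Real.exp_zero, zero_add, mul_one] at h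
    linarith
end

section
/- Let n ≥ 2 and let x_1, …, x_n be real numbers with at least two distinct values. For λ ∈ ℝ define S_Ψ(λ) = Σ_i Ψ(λ, x_i), S_{Ψ²}(λ) = Σ_i Ψ(λ, x_i)², S_{∂Ψ}(λ) = Σ_i ∂_λΨ(λ, x_i), S_{∂Ψ²}(λ) = Σ_i 2·Ψ(λ, x_i)·∂_λΨ(λ, x_i), and S_φ = Σ_i sign(x_i)·log(|x_i| + 1). Then the Yeo-Johnson negative log-likelihood NLL(λ) = (n/2)·log σ²_λ − (λ−1)·S_φ + (n/2)·log(2π) is differentiable in λ, with NLL′(λ) = (n/2)·(S_{∂Ψ²}(λ) − 2·S_Ψ(λ)·S_{∂Ψ}(λ)/n)/(S_{Ψ²}(λ) − S_Ψ(λ)²/n) − S_φ. -/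
open scoped BigOperators

/-- The partial derivative of the Yeo-Johnson transformation with respect to `λ`. -/
noncomputable def yjDeriv (l x : ℝ) : ℝ := deriv (fun t => yj t x) l

/-- One-sided Box-Cox map. -/
noncomputable def boxCox (m a : ℝ) : ℝ := if m ≠ 0 then (a ^ m - 1) / m else Real.log a

lemma yj_eq (l x : ℝ) :
    yj l x = if 0 ≤ x then boxCox l (x + 1) else -boxCox (2 - l) (1 - x) := by
  unfold yj boxCox
  by_cases hx : 0 ≤ x
  · simp [hx]
  · by_cases hl : l = 2
    · simp [hx, hl]
    · have : 2 - l ≠ 0 := fun h => hl (by linarith)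
      simp [hx, hl, this]

lemma boxCox_strictMono (m a b : ℝ) (ha : 0 < a) (hab : a < b) :
    boxCox m a < boxCox m b := by
  unfold boxCox
  rcases lt_trichotomy m 0 with hm | hm | hm
  · have := Real.rpow_lt_rpow_of_neg ha hab hm
    simp only [hm.ne, ne_eq, not_false_eq_true, if_true]
    exact (div_lt_div_right_of_neg hm).2 (by linarith)
  · simpa [hm] using Real.log_lt_log ha hab
  · have := Real.rpow_lt_rpow ha.le hab hm
    simp only [hm.ne', ne_eq, not_false_eq_true, if_true]
    exact div_lt_div_of_pos_right (by linarith) hm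

lemma boxCox_one (m : ℝ) : boxCox m 1 = 0 := by
  unfold boxCox; simp

lemma boxCox_differentiable (a : ℝ) (ha : 0 < a) : Differentiable ℝ (fun m => boxCox m a) := by
  have hd : ∀ m, HasDerivAt (fun s : ℝ => a ^ s) (a ^ m * Real.log a) m := fun m => by
    simpa using (Real.hasStrictDerivAt_const_rpow ha m).hasDerivAt
  have he : (fun m => boxCox m a) = dslope (fun s : ℝ => a ^ s) 0 := by
    funext m
    by_cases hm : m = 0
    · subst hm
      simp [boxCox, dslope_same, (hd 0).deriv]
    · rw [dslope_of_ne _ hm, slope_def_field]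
      simp [boxCox, hm]
  rw [he]
  intro m
  by_cases hm : m = 0
  · subst hm
    have hA : AnalyticAt ℝ (fun s : ℝ => a ^ s) 0 := by
      have : (fun s : ℝ => a ^ s) = fun s => Real.exp (Real.log a * s) := by
        funext s; rw [Real.rpow_def_of_pos ha]
      rw [this]
      fun_prop
    obtain ⟨p, hp⟩ := hA
    exact hp.has_fpower_series_dslope_fslope.differentiableAt
  · exact (differentiableAt_dslope_of_ne hm).2 (hd m).differentiableAt

lemma yj_differentiable (x : ℝ) : Differentiable ℝ (fun l => yj l x) := by
  by_cases hx : 0 ≤ x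
  · simp only [yj_eq, hx, if_true]
    exact boxCox_differentiable _ (by linarith)
  · simp only [yj_eq, hx, if_false]
    have h := boxCox_differentiable (1 - x) (by linarith)
    exact (h.comp (g := fun m => boxCox m (1 - x)) (f := fun l : ℝ => 2 - l) (by fun_prop)).neg

lemma yj_strictMono (l : ℝ) : StrictMono (yj l) := by
  intro x y hxy
  rw [yj_eq, yj_eq]
  by_cases hx : 0 ≤ x
  · have hy : 0 ≤ y := hx.trans hxy.le
    simp only [hx, hy, if_true]
    exact boxCox_strictMono _ _ _ (by linarith) (by linarith)
  · by_cases hy : 0 ≤ y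
    · simp only [hx, hy, if_true, if_false]
      have h1 := boxCox_strictMono (2 - l) 1 (1 - x) one_pos (by linarith)
      have h2 : 0 ≤ boxCox l (y + 1) := by
        rcases hy.eq_or_lt with h | h
        · simp [← h, boxCox_one]
        · have := boxCox_strictMono l 1 (y + 1) one_pos (by linarith)
          rw [boxCox_one] at this
          exact this.le
      rw [boxCox_one] at h1
      linarith
    · simp only [hx, hy, if_false]
      have := boxCox_strictMono (2 - l) (1 - y) (1 - x) (by linarith) (by linarith)
      linarith

lemma var_pos (n : ℕ) (hn : 2 ≤ n) (y : Fin n → ℝ) (h : ∃ i j, y i ≠ y j) :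
    0 < (∑ i, y i ^ 2) - (∑ i, y i) ^ 2 / n := by
  have hn0 : (n : ℝ) ≠ 0 := by positivity
  have key : (∑ i, y i ^ 2) - (∑ i, y i) ^ 2 / n = ∑ i, (y i - (∑ j, y j) / n) ^ 2 := by
    simp only [sub_sq, Finset.sum_add_distrib, Finset.sum_sub_distrib, ← Finset.sum_mul,
      ← Finset.mul_sum, Finset.sum_const, Finset.card_univ, Fintype.card_fin, nsmul_eq_mul]
    field_simp
    ring
  rw [key]
  obtain ⟨i, j, hij⟩ := h
  by_contra hc
  have h0 : ∑ i, (y i - (∑ j, y j) / n) ^ 2 = 0 :=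
    le_antisymm (not_lt.1 hc) (Finset.sum_nonneg fun _ _ => sq_nonneg _)
  rw [Finset.sum_eq_zero_iff_of_nonneg (fun _ _ => sq_nonneg _)] at h0
  have hi := pow_eq_zero_iff (two_ne_zero) |>.1 (h0 i (Finset.mem_univ _))
  have hj := pow_eq_zero_iff (two_ne_zero) |>.1 (h0 j (Finset.mem_univ _))
  exact hij (by linarith)

/-- The Yeo-Johnson negative log-likelihood is differentiable in `λ`, with the stated
closed-form derivative. -/
theorem yj_nll_hasDerivAt (n : ℕ) (hn : 2 ≤ n) (x : Fin n → ℝ)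
    (hdist : ∃ i j, x i ≠ x j) (l : ℝ) :
    HasDerivAt (fun t : ℝ =>
        (n / 2 : ℝ) *
            Real.log ((∑ i, yj t (x i) ^ 2) / n - ((∑ i, yj t (x i)) / n) ^ 2)
          - (t - 1) * ∑ i, Real.sign (x i) * Real.log (|x i| + 1)
          + (n / 2 : ℝ) * Real.log (2 * Real.pi))
      ((n / 2 : ℝ) *
          ((∑ i, 2 * yj l (x i) * yjDeriv l (x i))
              - 2 * (∑ i, yj l (x i)) * (∑ i, yjDeriv l (x i)) / n)
          / ((∑ i, yj l (x i) ^ 2) - (∑ i, yj l (x i)) ^ 2 / n)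
        - ∑ i, Real.sign (x i) * Real.log (|x i| + 1)) l := by
  have hn0 : (n : ℝ) ≠ 0 := by positivity
  have hd : ∀ i, HasDerivAt (fun t => yj t (x i)) (yjDeriv l (x i)) l := fun i =>
    (yj_differentiable (x i) l).hasDerivAt
  have hv := var_pos n hn (fun i => yj l (x i)) (by
    obtain ⟨i, j, hij⟩ := hdist
    exact ⟨i, j, fun h => hij ((yj_strictMono l).injective h)⟩)
  have hS : HasDerivAt (fun t => ∑ i, yj t (x i)) (∑ i, yjDeriv l (x i)) l :=
    HasDerivAt.fun_sum fun i _ => hd i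
  have hS2 : HasDerivAt (fun t => ∑ i, yj t (x i) ^ 2)
      (∑ i, 2 * yj l (x i) * yjDeriv l (x i)) l :=
    HasDerivAt.fun_sum fun i _ => by simpa using (hd i).fun_pow 2
  have hvar := (hS2.div_const (n : ℝ)).fun_sub ((hS.div_const (n : ℝ)).fun_pow 2)
  have hne : (∑ i, yj l (x i) ^ 2) / n - ((∑ i, yj l (x i)) / n) ^ 2 =
      ((∑ i, yj l (x i) ^ 2) - (∑ i, yj l (x i)) ^ 2 / n) / n := by
    field_simp
  have hne' : (∑ i, yj l (x i) ^ 2) / n - ((∑ i, yj l (x i)) / n) ^ 2 ≠ 0 := by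
    rw [hne]
    exact div_ne_zero hv.ne' hn0
  have hlin : HasDerivAt (fun t : ℝ => (t - 1) * ∑ i, Real.sign (x i) * Real.log (|x i| + 1))
      (∑ i, Real.sign (x i) * Real.log (|x i| + 1)) l := by
    simpa using ((hasDerivAt_id l).sub_const 1).mul_const
      (∑ i, Real.sign (x i) * Real.log (|x i| + 1))
  have hfin := (((hvar.log hne').const_mul (n / 2 : ℝ)).fun_sub hlin).add_const
    ((n / 2 : ℝ) * Real.log (2 * Real.pi))
  refine hfin.congr_deriv ?_
  rw [hne]
  have hv' := hv.ne'
  congr 1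
  generalize (∑ i, yj l (x i) ^ 2) - (∑ i, yj l (x i)) ^ 2 / n = V at *
  generalize (∑ i, 2 * yj l (x i) * yjDeriv l (x i)) = A at *
  norm_num
  field_simp
end

section
/- Let f : ℝ → ℝ be differentiable and strictly convex with a global minimizer λ_*. Consider the exponential-search iteration with state (λ_t, λ_t⁻, λ_t⁺) ∈ ℝ × (ℝ ∪ {−∞}) × (ℝ ∪ {+∞}) started from λ_0 = 0, λ_0⁻ = −∞, λ_0⁺ = +∞ and updated by the ExpUpdate rule driven by Δ_t ∈ {−1, +1}: if Δ_t = 1 then λ_t⁻ ← λ_{t−1} and λ_t ← (λ_{t−1}⁺ + λ_{t−1})/2 if λ_{t−1}⁺ < ∞, else λ_t ← max(2λ_{t−1}, 1); if Δ_t = −1 then λ_t⁺ ← λ_{t−1} and λ_t ← (λ_{t−1}⁻ + λ_{t−1})/2 if λ_{t−1}⁻ > −∞, else λ_t ← min(2λ_{t−1}, −1). Suppose the first sequence is driven by Δ_t = −sign(f′(λ_{t−1})) and the second sequence (λ′_t, λ′_t⁻, λ′_t⁺) is driven from the same initial state by Δ′_t = 1 if λ′_{t−1} < λ_* and Δ′_t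 = −1 otherwise. Then, provided λ_{t−1} ≠ λ_* for all steps t up to a horizon t_max, the two sequences of states and of signs coincide: (λ_t, λ_t⁻, λ_t⁺, Δ_t) = (λ′_t, λ′_t⁻, λ′_t⁺, Δ′_t) for all 1 ≤ t ≤ t_max. In particular, all intermediate signs Δ_t revealed by the iteration are a deterministic function of λ_* alone. -/
/-- The `ExpUpdate` rule of exponential search. The state is `(λ, λ⁻, λ⁺)`, where the
lower bound `λ⁻` lives in `ℝ ∪ {−∞}` and the upper bound `λ⁺` lives in `ℝ ∪ {+∞}`. -/
noncomputable def expUpdate (s : ℝ × WithBot ℝ × WithTop ℝ) (Δ : ℝ) :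
    ℝ × WithBot ℝ × WithTop ℝ :=
  if Δ = 1 then
    ((if h : s.2.2 = ⊤ then max (2 * s.1) 1 else (s.2.2.untop h + s.1) / 2),
      (s.1 : WithBot ℝ), s.2.2)
  else
    ((if h : s.2.1 = ⊥ then min (2 * s.1) (-1) else (s.2.1.unbot h + s.1) / 2),
      s.2.1, (s.1 : WithTop ℝ))

/-- For a differentiable strictly convex `f` with global minimizer `λ_*`, the
exponential-search iteration driven by `Δ_t = −sign(f′(λ_{t−1}))` coincides with the
iteration driven from the same initial state by `Δ′_t = 1` if `λ′_{t−1} < λ_*` and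
`Δ′_t = −1` otherwise, provided `λ_{t−1} ≠ λ_*` at every step up to the horizon
`t_max`. In particular, all intermediate signs revealed by the iteration are a
deterministic function of `λ_*` alone. -/
theorem expSearch_signs_determined_by_minimizer
    (f : ℝ → ℝ) (hf : Differentiable ℝ f) (hconv : StrictConvexOn ℝ Set.univ f)
    (lstar : ℝ) (hmin : ∀ l : ℝ, f lstar ≤ f l) (tmax : ℕ)
    (s s' : ℕ → ℝ × WithBot ℝ × WithTop ℝ) (Δ Δ' : ℕ → ℝ)
    (hs0 : s 0 = (0, ⊥, ⊤)) (hs'0 : s' 0 = (0, ⊥, ⊤))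
    (hΔ : ∀ t : ℕ, 1 ≤ t → t ≤ tmax → Δ t = -Real.sign (deriv f (s (t - 1)).1))
    (hs : ∀ t : ℕ, 1 ≤ t → t ≤ tmax → s t = expUpdate (s (t - 1)) (Δ t))
    (hΔ' : ∀ t : ℕ, 1 ≤ t → t ≤ tmax →
      Δ' t = if (s' (t - 1)).1 < lstar then 1 else -1)
    (hs' : ∀ t : ℕ, 1 ≤ t → t ≤ tmax → s' t = expUpdate (s' (t - 1)) (Δ' t))
    (hne : ∀ t : ℕ, 1 ≤ t → t ≤ tmax → (s (t - 1)).1 ≠ lstar) :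
    ∀ t : ℕ, 1 ≤ t → t ≤ tmax → s t = s' t ∧ Δ t = Δ' t := by
  have h0 : deriv f lstar = 0 :=
    IsLocalMin.deriv_eq_zero (Filter.Eventually.of_forall hmin)
  have hmono : StrictMonoOn (deriv f) Set.univ :=
    hconv.strictMonoOn_deriv (fun x _ => hf x)
  have hsign : ∀ l : ℝ, l ≠ lstar →
      -Real.sign (deriv f l) = if l < lstar then 1 else -1 := by
    intro l hl
    rcases lt_or_gt_of_ne hl with h | h
    · have h1 := hmono (Set.mem_univ _) (Set.mem_univ _) h
      rw [h0] at h1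
      rw [Real.sign_of_neg h1, if_pos h, neg_neg]
    · have h1 := hmono (Set.mem_univ _) (Set.mem_univ _) h
      rw [h0] at h1
      rw [Real.sign_of_pos h1, if_neg (not_lt.mpr h.le)]
  have hstep : ∀ t : ℕ, 1 ≤ t → t ≤ tmax → s (t - 1) = s' (t - 1) → Δ t = Δ' t := by
    intro t h1 h2 h
    rw [hΔ t h1 h2, hΔ' t h1 h2, hsign _ (hne t h1 h2), h]
  have hstate : ∀ t : ℕ, t ≤ tmax → s t = s' t := by
    intro t
    induction t with
    | zero => intro _; rw [hs0, hs'0]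
    | succ k ih =>
      intro hk
      have hk1 : 1 ≤ k + 1 := Nat.le_add_left 1 k
      have e : s (k + 1 - 1) = s' (k + 1 - 1) := ih (by omega)
      rw [hs _ hk1 hk, hs' _ hk1 hk, hstep _ hk1 hk e, e]
  intro t h1 h2
  exact ⟨hstate t h2, hstep t h1 h2 (hstate (t - 1) (by omega))⟩
end
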